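/- Let f : ℂⁿ → ℂ be a mixed polynomial that depends effectively on all its variables and satisfies f(0) = 0. If f is Newton strongly non-degenerate, then both f(Sing f) and S(f) are bounded subsets of ℂ. -/

import Mathlib

open Complex Filter Finset

noncomputable section

abbrev MixedCoeff (n : ℕ) := ((Fin n → ℕ) × (Fin n → ℕ)) →₀ ℂ

namespace Mixed

variable {n : ℕ}

/-- Evaluation of a mixed polynomial given by its coefficient function `c`:
`f(z) = Σ c(ν,μ) zᵛ z̄ᵘ`. -/
def eval (c : MixedCoeff n) (z : Fin n → ℂ) : ℂ :=
  c.sum fun p a => a * (∏ i, z i ^ p.1 i) * ∏ i, (starRingEnd ℂ) (z i) ^ p.2 i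

/-- `∂f/∂z_i` evaluated at `(z, z̄)`. -/
def dz (c : MixedCoeff n) (i : Fin n) (z : Fin n → ℂ) : ℂ :=
  c.sum fun p a => a * (p.1 i) * (∏ j, z j ^ (p.1 j - if j = i then 1 else 0)) *
    ∏ j, (starRingEnd ℂ) (z j) ^ p.2 j

/-- `∂f/∂z̄_i` evaluated at `(z, z̄)`. -/
def dzbar (c : MixedCoeff n) (i : Fin n) (z : Fin n → ℂ) : ℂ :=
  c.sum fun p a => a * (p.2 i) * (∏ j, z j ^ p.1 j) *
    ∏ j, (starRingEnd ℂ) (z j) ^ (p.2 j - if j = i then 1 else 0)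

/-- The singular locus of `f` as a real map `ℝ²ⁿ → ℝ²`. -/
def Sing (c : MixedCoeff n) : Set (Fin n → ℂ) :=
  {z | ¬ Function.Surjective ⇑(fderiv ℝ (eval c) z)}

/-- The Milnor set `M(f)`. -/
def Milnor (c : MixedCoeff n) : Set (Fin n → ℂ) :=
  {z | ∃ (l : ℝ) (m : ℂ), m ≠ 0 ∧
    ∀ i, (l : ℂ) * z i = m * (starRingEnd ℂ) (dz c i z) + (starRingEnd ℂ) m * dzbar c i z}

/-- The set `S(f)` of asymptotic ρ-nonregular values. -/
def Sset (c : MixedCoeff n) : Set ℂ :=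
  {v | ∃ zk : ℕ → (Fin n → ℂ), (∀ k, zk k ∈ Milnor c) ∧
    Tendsto (fun k => ‖zk k‖) atTop atTop ∧
    Tendsto (fun k => eval c (zk k)) atTop (nhds v)}

/-- The point of `ℝⁿ` attached to the exponent pair `(ν,μ)`, namely `ν+μ`. -/
def suppPt (p : (Fin n → ℕ) × (Fin n → ℕ)) : Fin n → ℝ := fun i => ((p.1 i + p.2 i : ℕ) : ℝ)

/-- The support of `f`, as a subset of `ℝⁿ`. -/
def suppPts (c : MixedCoeff n) : Set (Fin n → ℝ) := suppPt '' (c.support : Set _)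

/-- The Newton polyhedron `Γ₀(f)`: convex hull of `{0} ∪ supp(f)`. -/
def Gamma0 (c : MixedCoeff n) : Set (Fin n → ℝ) := convexHull ℝ (insert 0 (suppPts c))

/-- `supp(f)‾`: the convex hull of `supp(f) \ {0}`. -/
def suppBar (c : MixedCoeff n) : Set (Fin n → ℝ) := convexHull ℝ (suppPts c \ {0})

/-- `F` is a face of the (compact convex) set `C`: either `C` itself or the set of
minimizers on `C` of a linear functional, and nonempty. -/
def IsFaceOf (C F : Set (Fin n → ℝ)) : Prop :=
  F.Nonempty ∧ (F = C ∨ ∃ a : Fin n → ℝ,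
    F = {x ∈ C | ∀ y ∈ C, ∑ i, a i * x i ≤ ∑ i, a i * y i})

/-- `Δ` is a face of the Newton boundary at infinity `Γ⁺(f)`: a face of `Γ₀(f)` not
containing the origin. -/
def IsGammaPlusFace (c : MixedCoeff n) (Δ : Set (Fin n → ℝ)) : Prop :=
  IsFaceOf (Gamma0 c) Δ ∧ (0 : Fin n → ℝ) ∉ Δ

/-- `Γ⁺(f)` as a subset of `ℝⁿ`: the union of the faces of `Γ₀(f)` not containing `0`. -/
def GammaPlusSet (c : MixedCoeff n) : Set (Fin n → ℝ) :=
  {x | ∃ Δ, IsGammaPlusFace c Δ ∧ x ∈ Δ}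

/-- The truncation `f_Δ` of `f` to a subset `Δ ⊆ ℝⁿ`. -/
def trunc (c : MixedCoeff n) (Δ : Set (Fin n → ℝ)) : MixedCoeff n :=
  @Finsupp.filter _ _ _ (fun p => suppPt p ∈ Δ) (Classical.decPred _) c

/-- Newton non-degeneracy: for every face `Δ` of `Γ⁺(f)`,
`Sing f_Δ ∩ f_Δ⁻¹(0) ∩ (ℂ*)ⁿ = ∅`. -/
def NewtonNonDeg (c : MixedCoeff n) : Prop :=
  ∀ Δ, IsGammaPlusFace c Δ → ∀ z : Fin n → ℂ, (∀ i, z i ≠ 0) →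
    eval (trunc c Δ) z = 0 → z ∉ Sing (trunc c Δ)

/-- Newton strong non-degeneracy: for every face `Δ` of `Γ⁺(f)`,
`Sing f_Δ ∩ (ℂ*)ⁿ = ∅`. -/
def NewtonStronglyNonDeg (c : MixedCoeff n) : Prop :=
  ∀ Δ, IsGammaPlusFace c Δ → ∀ z : Fin n → ℂ, (∀ i, z i ≠ 0) →
    z ∉ Sing (trunc c Δ)

/-- `Δ` is a bad face of `supp(f)‾`. -/
def IsBadFace (c : MixedCoeff n) (Δ : Set (Fin n → ℝ)) : Prop :=
  IsFaceOf (suppBar c) Δ ∧ (0 : Fin n → ℝ) ∈ affineSpan ℝ Δ ∧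
    ∃ a : Fin n → ℝ, (∃ i, a i < 0) ∧ (∃ j, 0 < a j) ∧
      {x ∈ suppBar c | ∑ i, a i * x i = 0} = Δ

/-- `f` depends effectively on all its variables. -/
def EffectiveAll (c : MixedCoeff n) : Prop :=
  ∀ i, ∃ p ∈ c.support, 0 < p.1 i + p.2 i

/-- The Euclidean norm on `ℂⁿ`. -/
def norm2 (v : Fin n → ℂ) : ℝ := Real.sqrt (∑ i, Complex.normSq (v i))

end Mixed

/-!
Normalise the vector of the monomials of `f`, with the constant monomial `1` included. Let `w` be
a limit of such vectors along points of `(ℂ*)ⁿ` at which the monomials become unbounded. The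
logarithms of the absolute values of the surviving monomials converge and those of the others tend
to `-∞`, so finite-dimensional linear algebra in logarithmic coordinates provides a weight and a
point of `(ℂ*)ⁿ` showing that `w` is a positive multiple of the monomial vector of a truncation
`f_Δ`, with `Δ` a face of `Γ⁺(f)`. Since the logarithmic gradient depends linearly on the
monomials, strong non-degeneracy bounds it from below by a multiple of the size of the monomials
as soon as these are large. In particular the monomials, hence `f`, are bounded on `Sing f`.

On the Milnor set the normalised logarithmic gradient has components `l * ‖z i‖ ^ 2` with `l`
real; let `γ` be its limit along a sequence defining a value `b` of `S(f)`. As `l → 0`, the same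
linear algebra provides a weight for which `w` is homogeneous of some degree `D` and which takes a
common value `s ≠ 0` at all `i` with `γ i ≠ 0`. Euler's identity then reads
`s * ∑ i, γ i = D * Re (conj m * b * w 0)`, and the right-hand side vanishes because `D = 0` when
`w 0 ≠ 0`. All the `γ i` have the same sign, so `γ = 0`, which contradicts the lower bound unless
`b` is small.
-/

namespace Mixed

open scoped Topology ComplexConjugate

section LimitsAndRecession

lemma exists_tendsto_ultrafilter_of_isCompact {α E : Type*} [TopologicalSpace E] {K : Set E}
    (hK : IsCompact K) (F : Ultrafilter α) {u : α → E} (hu : ∀ k, u k ∈ K) :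
    ∃ x ∈ K, Tendsto u F (𝓝 x) :=
  hK.ultrafilter_le_nhds (F.map u)
    (le_principal_iff.2 (Ultrafilter.mem_map.2 (Eventually.of_forall hu)))

lemma exists_mem_fiber_and_recession {α κ E V : Type*} [Finite κ]
    [AddCommGroup E] [Module ℝ E] [FiniteDimensional ℝ E]
    [AddCommGroup V] [Module ℝ V] [TopologicalSpace V] [IsTopologicalAddGroup V]
    [ContinuousSMul ℝ V] [T2Space V] {F : Filter α} [NeBot F] {X : α → E}
    (A : E →ₗ[ℝ] V) {r : V} (hA : Tendsto (fun k => A (X k)) F (𝓝 r))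
    (N : κ → E →ₗ[ℝ] ℝ) (hN : ∀ j, Tendsto (fun k => N j (X k)) F atBot) :
    ∃ y v : E, A y = r ∧ A v = 0 ∧ ∀ j, N j v < 0 := by
  have hclosed : IsClosed (LinearMap.range A : Set V) := Submodule.closed_of_finiteDimensional _
  have hr : r ∈ LinearMap.range A :=
    hclosed.mem_of_tendsto hA (Eventually.of_forall fun k => LinearMap.mem_range_self A _)
  obtain ⟨R, hR⟩ := A.rangeRestrict.exists_rightInverse_of_surjective A.range_rangeRestrict
  have hAR (y : LinearMap.range A) : A (R y) = y := congrArg Subtype.val (LinearMap.congr_fun hR y)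
  -- `X k - R (A (X k))` lies in `ker A`, and the correction `R (A (X k))` converges.
  have hcorr (j : κ) :
      Tendsto (fun k => N j (R (A.rangeRestrict (X k)))) F (𝓝 (N j (R ⟨r, hr⟩))) :=
    ((N j ∘ₗ R).continuous_of_finiteDimensional.tendsto _).comp (tendsto_subtype_rng.2 hA)
  have hneg : ∀ᶠ k in F, ∀ j, N j (X k - R (A.rangeRestrict (X k))) < 0 := by
    refine eventually_all.2 fun j => ?_
    simpa only [map_sub, ← sub_eq_add_neg] using
      ((hN j).atBot_add (hcorr j).neg).eventually_lt_atBot 0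
  obtain ⟨k, hk⟩ := hneg.exists
  refine ⟨R ⟨r, hr⟩, _, hAR _, ?_, hk⟩
  rw [map_sub, hAR, LinearMap.codRestrict_apply, sub_self]

lemma not_surjective_iff_exists_unit_re_eq_zero {V : Type*} [AddCommGroup V] [Module ℝ V]
    (D : V →ₗ[ℝ] ℂ) :
    ¬ Function.Surjective D ↔ ∃ m : ℂ, ‖m‖ = 1 ∧ ∀ h, (conj m * D h).re = 0 := by
  have hinner (m w : ℂ) : (conj m * w).re = inner ℝ m w := by rw [Complex.inner, mul_comm]
  constructor
  · intro hD
    have hbot : (LinearMap.range D)ᗮ ≠ ⊥ := fun h =>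
      hD (LinearMap.range_eq_top.1 (Submodule.orthogonal_eq_bot_iff.1 h))
    obtain ⟨m, hm, hm0⟩ := Submodule.exists_mem_ne_zero_of_ne_bot hbot
    refine ⟨‖m‖⁻¹ • m, norm_smul_inv_norm (𝕜 := ℝ) hm0, fun h => ?_⟩
    rw [hinner, real_inner_smul_left,
      Submodule.inner_left_of_mem_orthogonal (LinearMap.mem_range_self D h) hm, mul_zero]
  · rintro ⟨m, hm, hD⟩ hsurj
    obtain ⟨h, rfl⟩ := hsurj m
    have := hD h
    rw [hinner, real_inner_self_eq_norm_sq, hm] at this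
    norm_num at this

lemma norm_sq_le_sum_norm_sq {ι E : Type*} [Fintype ι] [SeminormedAddCommGroup E] (z : ι → E) :
    ‖z‖ ^ 2 ≤ ∑ i, ‖z i‖ ^ 2 := by
  have hnonneg : 0 ≤ ∑ i, ‖z i‖ ^ 2 := sum_nonneg fun _ _ => sq_nonneg _
  rw [← Real.le_sqrt (norm_nonneg z) hnonneg, pi_norm_le_iff_of_nonneg (Real.sqrt_nonneg _)]
  exact fun i => Real.le_sqrt_of_sq_le
    (single_le_sum (f := fun i => ‖z i‖ ^ 2) (fun _ _ => sq_nonneg _) (mem_univ i))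

lemma dense_forall_ne_zero {ι : Type*} : Dense {z : ι → ℂ | ∀ i, z i ≠ 0} := by
  simpa only [Set.pi, Set.mem_univ, forall_const, Set.mem_compl_iff, Set.mem_singleton_iff] using
    dense_pi Set.univ fun (_ : ι) _ => dense_compl_singleton (0 : ℂ)

end LimitsAndRecession

variable {n : ℕ}

section Monomials

/-- The exponent pair `(ν, μ)` of a mixed monomial `z^ν z̄^μ`. -/
abbrev Exponent (n : ℕ) := (Fin n → ℕ) × (Fin n → ℕ)

/-- The mixed monomial `z^ν z̄^μ` with exponent `p = (ν, μ)`. -/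
def monomial (p : Exponent n) (z : Fin n → ℂ) : ℂ := (∏ i, z i ^ p.1 i) * ∏ i, conj (z i) ^ p.2 i

lemma eval_eq_sum_monomial (c : MixedCoeff n) (z : Fin n → ℂ) :
    eval c z = ∑ p ∈ c.support, c p * monomial p z := by
  simp only [eval, Finsupp.sum, monomial, mul_assoc]

lemma monomial_zero (z : Fin n → ℂ) : monomial 0 z = 1 := by simp [monomial]

lemma monomial_mul (p : Exponent n) (a b : Fin n → ℂ) :
    monomial p (a * b) = monomial p a * monomial p b := by
  simp only [monomial, Pi.mul_apply, mul_pow, map_mul, prod_mul_distrib]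
  ring

lemma monomial_ofReal (p : Exponent n) (r : Fin n → ℝ) :
    monomial p (fun i => (r i : ℂ)) = ((∏ i, r i ^ (p.1 i + p.2 i) : ℝ) : ℂ) := by
  simp only [monomial, conj_ofReal, ← prod_mul_distrib, ← pow_add]
  push_cast
  rfl

lemma norm_monomial (p : Exponent n) (z : Fin n → ℂ) :
    ‖monomial p z‖ = ∏ i, ‖z i‖ ^ (p.1 i + p.2 i) := by
  simp only [monomial, norm_mul, norm_prod, norm_pow, RCLike.norm_conj, pow_add, prod_mul_distrib]

lemma monomial_eq_monomial_mul_norm {z u : Fin n → ℂ} (h : ∀ i, z i = u i * ‖z i‖)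
    (p : Exponent n) : monomial p z = monomial p u * ‖monomial p z‖ := by
  rw [norm_monomial, ← monomial_ofReal, ← monomial_mul]
  exact congrArg (monomial p) (funext h)

lemma monomial_ne_zero (p : Exponent n) {z : Fin n → ℂ} (hz : ∀ i, z i ≠ 0) :
    monomial p z ≠ 0 := by
  rw [← norm_ne_zero_iff, norm_monomial]
  exact prod_ne_zero_iff.2 fun i _ => pow_ne_zero _ (norm_ne_zero_iff.2 (hz i))

-- A vanishing coordinate has exponent `0` here, so the junk value `log 0 = 0` is harmless.
lemma log_norm_monomial {p : Exponent n} {z : Fin n → ℂ} (h : monomial p z ≠ 0) :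
    Real.log ‖monomial p z‖ = suppPt p ⬝ᵥ fun i => Real.log ‖z i‖ := by
  rw [← norm_ne_zero_iff, norm_monomial, prod_ne_zero_iff] at h
  rw [norm_monomial, Real.log_prod h]
  simp only [Real.log_pow, suppPt, dotProduct]

lemma monomial_exp (p : Exponent n) (y : Fin n → ℝ) :
    monomial p (fun i => (Real.exp (y i) : ℂ)) = Real.exp (suppPt p ⬝ᵥ y) := by
  simp only [monomial_ofReal, ← Real.exp_nat_mul, ← Real.exp_sum, suppPt, dotProduct]

lemma continuous_monomial (p : Exponent n) : Continuous (monomial p) := by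
  have := Complex.continuous_conj
  unfold monomial
  fun_prop

end Monomials

section RealGradient

/-- The vector `m·conj(df) + conj(m)·∂̄f` from the definition of the Milnor set; it is the gradient
of `Re (conj m · f)` for the real inner product of `ℂⁿ`. -/
def realGrad (c : MixedCoeff n) (m : ℂ) (z : Fin n → ℂ) : Fin n → ℂ :=
  fun i => m * conj (dz c i z) + conj m * dzbar c i z

lemma hasFDerivAt_prod_pow {𝕜 𝔸 E ι : Type*} [NontriviallyNormedField 𝕜] [NormedCommRing 𝔸]
    [NormedAlgebra 𝕜 𝔸] [NormedAddCommGroup E] [NormedSpace 𝕜 E] [Fintype ι] [DecidableEq ι]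
    {g : ι → E → 𝔸} {g' : ι → E →L[𝕜] 𝔸} {x : E} (hg : ∀ i, HasFDerivAt (g i) (g' i) x)
    (q : ι → ℕ) :
    HasFDerivAt (fun y => ∏ j, g j y ^ q j)
      (∑ i, ((q i : 𝔸) * ∏ j, g j x ^ (q j - if j = i then 1 else 0)) • g' i) x := by
  refine (HasFDerivAt.finsetProd fun i _ => (hg i).pow (q i)).congr_fderiv
    (sum_congr rfl fun i _ => ?_)
  have herase : ∏ j ∈ univ.erase i, g j x ^ (q j - if j = i then 1 else 0) =
      ∏ j ∈ univ.erase i, g j x ^ q j :=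
    prod_congr rfl fun j hj => by rw [if_neg (ne_of_mem_erase hj), Nat.sub_zero]
  rw [← prod_erase_mul _ _ (mem_univ i), herase, if_pos rfl, nsmul_eq_mul, smul_smul,
    mul_left_comm]

lemma hasFDerivAt_eval (c : MixedCoeff n) (z : Fin n → ℂ) :
    HasFDerivAt (𝕜 := ℝ) (eval c)
      (∑ i, (dz c i z • ContinuousLinearMap.proj (R := ℝ) (φ := fun _ : Fin n => ℂ) i +
        dzbar c i z • (conjCLE : ℂ →L[ℝ] ℂ) ∘L
          ContinuousLinearMap.proj (R := ℝ) (φ := fun _ : Fin n => ℂ) i)) z := by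
  have hcoord (i : Fin n) := hasFDerivAt_apply (𝕜 := ℝ) i z
  have hconj (i : Fin n) := (conjCLE.hasFDerivAt (x := z i)).comp z (hcoord i)
  refine (HasFDerivAt.fun_sum (u := c.support) fun p _ =>
    ((hasFDerivAt_prod_pow hcoord p.1).const_mul (c p)).mul
      (hasFDerivAt_prod_pow hconj p.2)).congr_fderiv ?_
  refine ContinuousLinearMap.ext fun h => ?_
  simp only [ContinuousAlgEquiv.coe_coeCLE, Function.comp_apply, conjCAE_apply, _root_.sum_apply,
    add_apply, smul_apply, ContinuousLinearMap.comp_apply, ContinuousLinearMap.proj_apply,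
    ContinuousLinearEquiv.coe_coe, ContinuousAlgEquiv.coeCLE_apply, smul_eq_mul, mul_sum, sum_mul,
    ← sum_add_distrib, dz, dzbar, Finsupp.sum]
  rw [sum_comm]
  refine sum_congr rfl fun i _ => sum_congr rfl fun p _ => ?_
  ring

lemma re_conj_mul_fderiv_eval (c : MixedCoeff n) (m : ℂ) (z h : Fin n → ℂ) :
    (conj m * fderiv ℝ (eval c) z h).re = ∑ i, (h i * conj (realGrad c m z i)).re := by
  rw [(hasFDerivAt_eval c z).fderiv]
  simp only [_root_.sum_apply, mul_sum, re_sum]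
  refine sum_congr rfl fun i _ => ?_
  simp only [realGrad, add_apply, smul_apply, ContinuousLinearMap.comp_apply,
    ContinuousLinearMap.proj_apply, ContinuousLinearEquiv.coe_coe, ContinuousAlgEquiv.coeCLE_apply,
    conjCAE_apply, smul_eq_mul, map_add, map_mul, conj_conj, add_re, add_im, mul_re, mul_im,
    conj_re, conj_im]
  ring

lemma mem_Sing_iff {c : MixedCoeff n} {z : Fin n → ℂ} :
    z ∈ Sing c ↔ ∃ m : ℂ, ‖m‖ = 1 ∧ realGrad c m z = 0 := by
  refine (not_surjective_iff_exists_unit_re_eq_zero (fderiv ℝ (eval c) z).toLinearMap).trans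
    (exists_congr fun m => and_congr_right fun _ => ?_)
  simp only [ContinuousLinearMap.coe_coe, re_conj_mul_fderiv_eval]
  constructor
  · intro h
    ext i
    have := h (Pi.single i (realGrad c m z i))
    rw [sum_eq_single i (fun j _ hj => by simp [hj]) (by simp), Pi.single_eq_same, mul_conj,
      ofReal_re] at this
    exact normSq_eq_zero.1 this
  · intro h
    simp [h]

lemma exists_unit_realGrad_eq_of_mem_Milnor {c : MixedCoeff n} {z : Fin n → ℂ}
    (hz : z ∈ Milnor c) : ∃ (m : ℂ) (l : ℝ), ‖m‖ = 1 ∧ ∀ i, realGrad c m z i = l * z i := by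
  obtain ⟨l, m, hm, hl⟩ := hz
  refine ⟨‖m‖⁻¹ • m, ‖m‖⁻¹ * l, norm_smul_inv_norm (𝕜 := ℝ) hm, fun i => ?_⟩
  simp only [realGrad, real_smul, map_mul, conj_ofReal, ofReal_mul]
  linear_combination -((‖m‖⁻¹ : ℝ) : ℂ) * hl i

end RealGradient

section LogarithmicGradient

/-- The logarithmic gradient `(conj (z i) · (realGrad c m z) i)ᵢ`, written as a real-linear function
of a vector `W` of values of the monomials. -/
def logForm (c : MixedCoeff n) (m : ℂ) (W : Exponent n → ℂ) : Fin n → ℂ := fun i =>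
  ∑ p ∈ c.support, (m * conj (c p * p.1 i * W p) + conj m * (c p * p.2 i * W p))

lemma mul_natCast_mul_prod_pow_sub {ι R : Type*} [Fintype ι] [DecidableEq ι] [CommSemiring R]
    (z : ι → R) (q : ι → ℕ) (i : ι) :
    z i * (q i * ∏ j, z j ^ (q j - if j = i then 1 else 0)) = q i * ∏ j, z j ^ q j := by
  rcases Nat.eq_zero_or_pos (q i) with h | h
  · simp only [h, Nat.cast_zero, zero_mul, mul_zero]
  · have hz : z i = ∏ j, z j ^ (if j = i then 1 else 0) := by simp
    rw [mul_left_comm, hz, ← prod_mul_distrib]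
    refine congrArg _ (prod_congr rfl fun j _ => ?_)
    rw [← pow_add]
    congr 1
    split_ifs with hj
    · subst hj
      exact Nat.add_sub_cancel' h
    · rw [zero_add, Nat.sub_zero]

lemma mul_dz (c : MixedCoeff n) (i : Fin n) (z : Fin n → ℂ) :
    z i * dz c i z = ∑ p ∈ c.support, c p * p.1 i * monomial p z := by
  simp only [dz, Finsupp.sum, mul_sum, monomial]
  refine sum_congr rfl fun p _ => ?_
  linear_combination
    (c p * ∏ j, conj (z j) ^ p.2 j) * mul_natCast_mul_prod_pow_sub z p.1 i

lemma conj_mul_dzbar (c : MixedCoeff n) (i : Fin n) (z : Fin n → ℂ) :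
    conj (z i) * dzbar c i z = ∑ p ∈ c.support, c p * p.2 i * monomial p z := by
  simp only [dzbar, Finsupp.sum, mul_sum, monomial]
  refine sum_congr rfl fun p _ => ?_
  linear_combination
    (c p * ∏ j, z j ^ p.1 j) * mul_natCast_mul_prod_pow_sub (fun j => conj (z j)) p.2 i

lemma logForm_monomial (c : MixedCoeff n) (m : ℂ) (z : Fin n → ℂ) (i : Fin n) :
    logForm c m (fun p => monomial p z) i = conj (z i) * realGrad c m z i := by
  simp only [logForm, sum_add_distrib, ← mul_sum, ← map_sum, ← mul_dz, ← conj_mul_dzbar, realGrad]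
  rw [map_mul]
  ring

lemma logForm_ofReal_mul (c : MixedCoeff n) (m : ℂ) (r : ℝ) (W : Exponent n → ℂ) (i : Fin n) :
    logForm c m (fun p => r * W p) i = r * logForm c m W i := by
  simp only [logForm, mul_sum, map_mul, conj_ofReal]
  exact sum_congr rfl fun p _ => by ring

lemma logForm_congr {c : MixedCoeff n} {W W' : Exponent n → ℂ} (h : ∀ p ∈ c.support, W p = W' p)
    (m : ℂ) : logForm c m W = logForm c m W' :=
  funext fun _ => sum_congr rfl fun p hp => by rw [h p hp]

lemma continuous_logForm (c : MixedCoeff n) :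
    Continuous fun x : ℂ × (Exponent n → ℂ) => logForm c x.1 x.2 := by
  have := Complex.continuous_conj
  unfold logForm
  fun_prop

lemma tendsto_logForm {α : Type*} (c : MixedCoeff n) {F : Filter α} {m : α → ℂ} {m₀ : ℂ}
    {W : α → Exponent n → ℂ} {w : Exponent n → ℂ} (hm : Tendsto m F (𝓝 m₀))
    (hW : Tendsto W F (𝓝 w)) : Tendsto (fun k => logForm c (m k) (W k)) F (𝓝 (logForm c m₀ w)) :=
  ((continuous_logForm c).tendsto (m₀, w)).comp (f := fun k => (m k, W k)) (hm.prodMk_nhds hW)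

lemma logForm_trunc (c : MixedCoeff n) (Δ : Set (Fin n → ℝ)) (m : ℂ) (W : Exponent n → ℂ) :
    logForm (trunc c Δ) m W = logForm c m ({p | suppPt p ∈ Δ}.indicator W) := by
  classical
  ext i
  simp only [logForm, trunc, Finsupp.support_filter, sum_filter]
  refine sum_congr rfl fun p _ => ?_
  by_cases hp : suppPt p ∈ Δ <;> simp [hp]

-- Euler's identity for a quasi-homogeneous polynomial of weight `v` and degree `D`.
lemma sum_mul_re_logForm {c : MixedCoeff n} {W : Exponent n → ℂ} {v : Fin n → ℝ} {D : ℝ}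
    (hv : ∀ p ∈ c.support, W p ≠ 0 → suppPt p ⬝ᵥ v = D) (m : ℂ) :
    ∑ i, v i * (logForm c m W i).re = D * (conj m * ∑ p ∈ c.support, c p * W p).re := by
  simp only [logForm, re_sum, mul_sum]
  rw [sum_comm]
  refine sum_congr rfl fun p hp => ?_
  by_cases hW : W p = 0
  · simp [hW]
  · rw [← hv p hp hW, dotProduct, sum_mul]
    refine sum_congr rfl fun i _ => ?_
    simp only [suppPt, map_mul, map_natCast, Nat.cast_add, add_re, mul_re, mul_im, conj_re, conj_im,
      natCast_re, natCast_im]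
    ring

end LogarithmicGradient

section RelativeMonomials

/-- The exponents occurring in `f`, together with the exponent of the constant monomial; their
points span `Γ₀(f)`. -/
def gammaExps (c : MixedCoeff n) : Finset (Exponent n) := insert 0 c.support

/-- The sum of the absolute values at `z` of the monomials with exponent in `gammaExps c`. -/
def size (c : MixedCoeff n) (z : Fin n → ℂ) : ℝ := ∑ p ∈ gammaExps c, ‖monomial p z‖

/-- The values at `z` of the monomials with exponent in `gammaExps c`, normalised to have sum of
absolute values `1`. -/
def relMonomial (c : MixedCoeff n) (z : Fin n → ℂ) : Exponent n → ℂ :=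
  (gammaExps c : Set (Exponent n)).indicator fun p => monomial p z / size c z

lemma zero_mem_gammaExps (c : MixedCoeff n) : 0 ∈ gammaExps c := mem_insert_self _ _

lemma mem_gammaExps_of_mem_support {c : MixedCoeff n} {p : Exponent n} (hp : p ∈ c.support) :
    p ∈ gammaExps c := mem_insert_of_mem hp

lemma norm_monomial_le_size {c : MixedCoeff n} {p : Exponent n} (hp : p ∈ gammaExps c)
    (z : Fin n → ℂ) : ‖monomial p z‖ ≤ size c z :=
  single_le_sum (f := fun p => ‖monomial p z‖) (fun _ _ => norm_nonneg _) hp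

lemma size_pos (c : MixedCoeff n) (z : Fin n → ℂ) : 0 < size c z := by
  have := norm_monomial_le_size (zero_mem_gammaExps c) z
  rw [monomial_zero, norm_one] at this
  exact one_pos.trans_le this

lemma continuous_size (c : MixedCoeff n) : Continuous (size c) :=
  continuous_finsetSum _ fun p _ => (continuous_monomial p).norm

lemma norm_eval_le (c : MixedCoeff n) (z : Fin n → ℂ) :
    ‖eval c z‖ ≤ (∑ p ∈ c.support, ‖c p‖) * size c z := by
  rw [eval_eq_sum_monomial, sum_mul]
  refine norm_sum_le_of_le _ fun p hp => ?_
  rw [norm_mul]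
  exact mul_le_mul_of_nonneg_left (norm_monomial_le_size (mem_gammaExps_of_mem_support hp) z)
    (norm_nonneg _)

lemma relMonomial_of_mem {c : MixedCoeff n} {p : Exponent n} (hp : p ∈ gammaExps c)
    (z : Fin n → ℂ) : relMonomial c z p = monomial p z / size c z :=
  Set.indicator_of_mem (mem_coe.2 hp) _

lemma continuous_relMonomial (c : MixedCoeff n) : Continuous (relMonomial c) := by
  refine continuous_pi fun p => ?_
  by_cases hp : p ∈ gammaExps c
  · simp only [relMonomial_of_mem hp]
    exact (continuous_monomial p).div (continuous_ofReal.comp (continuous_size c))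
      fun z => ofReal_ne_zero.2 (size_pos c z).ne'
  · simp only [relMonomial, Set.indicator_of_notMem (mt mem_coe.1 hp)]
    exact continuous_const

lemma sum_norm_relMonomial (c : MixedCoeff n) (z : Fin n → ℂ) :
    ∑ p ∈ gammaExps c, ‖relMonomial c z p‖ = 1 := by
  rw [← div_self (size_pos c z).ne', size, sum_div]
  refine sum_congr rfl fun p hp => ?_
  rw [relMonomial_of_mem hp, norm_div, norm_real, Real.norm_of_nonneg (size_pos c z).le, size]

lemma relMonomial_zero (c : MixedCoeff n) (z : Fin n → ℂ) :
    relMonomial c z 0 = 1 / size c z := by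
  rw [relMonomial_of_mem (zero_mem_gammaExps c), monomial_zero]

lemma tendsto_relMonomial_zero {α : Type*} {c : MixedCoeff n} {F : Filter α} {z : α → Fin n → ℂ}
    (hz : Tendsto (fun k => size c (z k)) F atTop) :
    Tendsto (fun k => relMonomial c (z k) 0) F (𝓝 0) := by
  simp only [relMonomial_zero, one_div, ← ofReal_inv]
  exact (continuous_ofReal.tendsto' 0 0 ofReal_zero).comp hz.inv_tendsto_atTop

lemma sum_mul_relMonomial (c : MixedCoeff n) (z : Fin n → ℂ) :
    ∑ p ∈ c.support, c p * relMonomial c z p = eval c z * relMonomial c z 0 := by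
  rw [eval_eq_sum_monomial, sum_mul, relMonomial_zero]
  refine sum_congr rfl fun p hp => ?_
  rw [relMonomial_of_mem (mem_gammaExps_of_mem_support hp)]
  ring

lemma logForm_relMonomial (c : MixedCoeff n) (m : ℂ) (z : Fin n → ℂ) (i : Fin n) :
    logForm c m (relMonomial c z) i = conj (z i) * realGrad c m z i / size c z := by
  have hrel : ∀ p ∈ c.support, relMonomial c z p = ((size c z)⁻¹ : ℝ) * monomial p z :=
    fun p hp => by
      rw [relMonomial_of_mem (mem_gammaExps_of_mem_support hp), ofReal_inv, inv_mul_eq_div]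
  rw [logForm_congr hrel, logForm_ofReal_mul, logForm_monomial, ofReal_inv, inv_mul_eq_div]

lemma exists_tendsto_relMonomial {α : Type*} (c : MixedCoeff n) (F : Ultrafilter α)
    (z : α → Fin n → ℂ) : ∃ w, Tendsto (fun k => relMonomial c (z k)) F (𝓝 w) := by
  have hle (k : α) (p : Exponent n) : ‖relMonomial c (z k) p‖ ≤ 1 := by
    by_cases hp : p ∈ gammaExps c
    · rw [← sum_norm_relMonomial c (z k)]
      exact single_le_sum (f := fun p => ‖relMonomial c (z k) p‖) (fun _ _ => norm_nonneg _) hp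
    · simp only [relMonomial, Set.indicator_of_notMem (mt mem_coe.1 hp), norm_zero, zero_le_one]
  obtain ⟨w, -, hw⟩ := exists_tendsto_ultrafilter_of_isCompact
    (isCompact_univ_pi fun _ : Exponent n => isCompact_closedBall (0 : ℂ) 1) F
    (u := fun k => relMonomial c (z k)) fun k p _ => mem_closedBall_zero_iff.2 (hle k p)
  exact ⟨w, hw⟩

end RelativeMonomials

section ToricDegeneration

/-- The linear functional `(x, t) ↦ ⟨ν + μ, x⟩ - t` attached to an exponent `p = (ν, μ)`. -/
def excess (p : Exponent n) : (Fin n → ℝ) × ℝ →ₗ[ℝ] ℝ :=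
  (dotProductBilin ℝ ℝ (suppPt p)).coprod (-LinearMap.id)

lemma excess_apply (p : Exponent n) (y : (Fin n → ℝ) × ℝ) :
    excess p y = suppPt p ⬝ᵥ y.1 - y.2 := by
  simp [excess, sub_eq_add_neg]

lemma suppPt_zero : suppPt (0 : Exponent n) = 0 := by
  ext i
  simp [suppPt]

/-- The logarithms of the absolute values of the coordinates of `z` and of `size c z`. -/
def logCoord (c : MixedCoeff n) (z : Fin n → ℂ) : (Fin n → ℝ) × ℝ :=
  (fun i => Real.log ‖z i‖, Real.log (size c z))

lemma excess_logCoord {c : MixedCoeff n} {z : Fin n → ℂ} {p : Exponent n}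
    (h : relMonomial c z p ≠ 0) :
    excess p (logCoord c z) = Real.log ‖relMonomial c z p‖ := by
  have hp : p ∈ gammaExps c := mem_coe.1 (Set.mem_of_indicator_ne_zero h)
  rw [relMonomial_of_mem hp] at h ⊢
  have hmon : monomial p z ≠ 0 := (div_ne_zero_iff.1 h).1
  rw [excess_apply, logCoord, ← log_norm_monomial hmon, norm_div, norm_real,
    Real.norm_of_nonneg (size_pos c z).le,
    Real.log_div (norm_ne_zero_iff.2 hmon) (size_pos c z).ne']

lemma relMonomial_ne_zero {c : MixedCoeff n} {p : Exponent n} (hp : p ∈ gammaExps c)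
    {z : Fin n → ℂ} (hz : ∀ i, z i ≠ 0) : relMonomial c z p ≠ 0 := by
  rw [relMonomial_of_mem hp]
  exact div_ne_zero (monomial_ne_zero p hz) (ofReal_ne_zero.2 (size_pos c z).ne')

lemma suppPt_mem_Gamma0 {c : MixedCoeff n} {p : Exponent n} (hp : p ∈ c.support) :
    suppPt p ∈ Gamma0 c :=
  subset_convexHull ℝ _ (Set.mem_insert_of_mem _ ⟨p, hp, rfl⟩)

lemma isGammaPlusFace_of_le {c : MixedCoeff n} {v : Fin n → ℝ} {D : ℝ} (hD : 0 < D)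
    (hle : ∀ p ∈ c.support, suppPt p ⬝ᵥ v ≤ D) (heq : ∃ p ∈ c.support, suppPt p ⬝ᵥ v = D) :
    IsGammaPlusFace c {x ∈ Gamma0 c | x ⬝ᵥ v = D} := by
  have hGamma : ∀ x ∈ Gamma0 c, x ⬝ᵥ v ≤ D := by
    refine convexHull_min ?_ (convex_halfSpace_le ((dotProductBilin ℝ ℝ).flip v).isLinear D)
    rintro x (rfl | ⟨p, hp, rfl⟩)
    · exact (zero_dotProduct v).trans_le hD.le
    · exact hle p hp
  have hmin (x : Fin n → ℝ) : ∑ i, (-v) i * x i = -(x ⬝ᵥ v) := by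
    rw [← dotProduct_neg, dotProduct_comm, dotProduct]
  obtain ⟨p, hp, hpD⟩ := heq
  refine ⟨⟨⟨suppPt p, suppPt_mem_Gamma0 hp, hpD⟩, Or.inr ⟨-v, ?_⟩⟩, ?_⟩
  · ext x
    simp only [Set.mem_ofPred_eq, hmin, neg_le_neg_iff]
    refine and_congr_right fun hx => ⟨fun h y hy => (hGamma y hy).trans_eq h.symm, fun h => ?_⟩
    exact (hGamma x hx).antisymm (hpD ▸ h _ (suppPt_mem_Gamma0 hp))
  · rintro ⟨-, h⟩
    exact hD.ne ((zero_dotProduct v).symm.trans h)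

section Limits

variable {α : Type*} {c : MixedCoeff n} {z : α → Fin n → ℂ} {w : Exponent n → ℂ} {p : Exponent n}

lemma tendsto_excess_logCoord {F : Filter α}
    (hw : Tendsto (fun k => relMonomial c (z k)) F (𝓝 w)) (hp : w p ≠ 0) :
    Tendsto (fun k => excess p (logCoord c (z k))) F (𝓝 (Real.log ‖w p‖)) := by
  have hlim := tendsto_pi_nhds.1 hw p
  refine (hlim.norm.log (norm_ne_zero_iff.2 hp)).congr' ?_
  filter_upwards [hlim.eventually_ne hp] with k hk using (excess_logCoord hk).symm

lemma tendsto_excess_logCoord_atBot {F : Filter α} (hz : ∀ k i, z k i ≠ 0)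
    (hw : Tendsto (fun k => relMonomial c (z k)) F (𝓝 w)) (hp : p ∈ gammaExps c) (hp0 : w p = 0) :
    Tendsto (fun k => excess p (logCoord c (z k))) F atBot := by
  have hne (k : α) : relMonomial c (z k) p ≠ 0 := relMonomial_ne_zero hp (hz k)
  have hlim : Tendsto (fun k => ‖relMonomial c (z k) p‖) F (𝓝[>] 0) := by
    refine tendsto_nhdsWithin_iff.2 ⟨?_, Eventually.of_forall fun k => norm_pos_iff.2 (hne k)⟩
    rw [← norm_zero (E := ℂ), ← hp0]
    exact (tendsto_pi_nhds.1 hw p).norm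
  exact (Real.tendsto_log_nhdsGT_zero.comp hlim).congr fun k => (excess_logCoord (hne k)).symm

lemma exists_phase_of_tendsto_relMonomial {F : Ultrafilter α} (hz : ∀ k i, z k i ≠ 0)
    (hw : Tendsto (fun k => relMonomial c (z k)) F (𝓝 w)) :
    ∃ u : Fin n → ℂ, (∀ i, u i ≠ 0) ∧ ∀ p ∈ gammaExps c, w p = monomial p u * ‖w p‖ := by
  have hphase (k : α) (i : Fin n) : z k i / ‖z k i‖ ∈ Metric.sphere (0 : ℂ) 1 := by
    rw [mem_sphere_zero_iff_norm, norm_div, norm_real, norm_norm,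
      div_self (norm_ne_zero_iff.2 (hz k i))]
  obtain ⟨u, hu, hlim⟩ := exists_tendsto_ultrafilter_of_isCompact
    (isCompact_univ_pi fun _ : Fin n => isCompact_sphere (0 : ℂ) 1) F
    (u := fun k i => z k i / ‖z k i‖) fun k i _ => hphase k i
  refine ⟨u, fun i => ne_zero_of_mem_unit_sphere ⟨u i, hu i trivial⟩, fun p hp => ?_⟩
  have hrel (k : α) : relMonomial c (z k) p =
      monomial p (fun i => z k i / ‖z k i‖) * ‖relMonomial c (z k) p‖ := by
    rw [relMonomial_of_mem hp, norm_div, ofReal_div, mul_div_assoc', norm_real,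
      Real.norm_of_nonneg (size_pos c (z k)).le, ← monomial_eq_monomial_mul_norm]
    exact fun i => (div_mul_cancel₀ _ (ofReal_ne_zero.2 (norm_ne_zero_iff.2 (hz k i)))).symm
  have hwp := tendsto_pi_nhds.1 hw p
  refine tendsto_nhds_unique (hwp.congr hrel) ?_
  exact (((continuous_monomial p).tendsto u).comp hlim).mul
    ((continuous_ofReal.tendsto _).comp hwp.norm)

lemma exists_weight_of_tendsto_relMonomial {F : Ultrafilter α} (hz : ∀ k i, z k i ≠ 0)
    (hw : Tendsto (fun k => relMonomial c (z k)) F (𝓝 w)) :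
    ∃ (v : Fin n → ℝ) (D : ℝ) (a : Fin n → ℂ) (r : ℝ), (∀ i, a i ≠ 0) ∧ ∀ p ∈ gammaExps c,
      (w p ≠ 0 → suppPt p ⬝ᵥ v = D ∧ monomial p a = r * w p) ∧
      (w p = 0 → suppPt p ⬝ᵥ v < D) := by
  obtain ⟨u, hu, hphase⟩ := exists_phase_of_tendsto_relMonomial hz hw
  obtain ⟨y, v, hy, hv, hneg⟩ := exists_mem_fiber_and_recession
    (F := (F : Filter α)) (X := fun k => logCoord c (z k))
    (LinearMap.pi fun p : {p // w p ≠ 0} => excess p.1)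
    (tendsto_pi_nhds.2 fun p => tendsto_excess_logCoord hw p.2)
    (fun p : {p : gammaExps c // w p = 0} => excess p.1.1)
    (fun p => tendsto_excess_logCoord_atBot hz hw p.1.2 p.2)
  refine ⟨v.1, v.2, fun i => u i * Real.exp (y.1 i), Real.exp y.2,
    fun i => mul_ne_zero (hu i) (ofReal_ne_zero.2 (Real.exp_pos _).ne'),
    fun p hp => ⟨fun h => ⟨?_, ?_⟩, fun h => ?_⟩⟩
  · exact sub_eq_zero.1 ((excess_apply p v).symm.trans (congrFun hv ⟨p, h⟩))
  · have hexcess : suppPt p ⬝ᵥ y.1 = Real.log ‖w p‖ + y.2 :=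
      sub_eq_iff_eq_add.1 ((excess_apply p y).symm.trans (congrFun hy ⟨p, h⟩))
    calc monomial p (fun i => u i * Real.exp (y.1 i))
        = monomial p u * Real.exp (suppPt p ⬝ᵥ y.1) := by
          rw [← monomial_exp, ← monomial_mul]; rfl
      _ = Real.exp y.2 * (monomial p u * ‖w p‖) := by
          rw [hexcess, Real.exp_add, Real.exp_log (norm_pos_iff.2 h), ofReal_mul]
          ring
      _ = Real.exp y.2 * w p := by rw [← hphase p hp]
  · exact sub_neg.1 (excess_apply p v ▸ hneg ⟨⟨p, hp⟩, h⟩)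

lemma exists_face_of_tendsto_relMonomial {F : Ultrafilter α} (hz : ∀ k i, z k i ≠ 0)
    (hw : Tendsto (fun k => relMonomial c (z k)) F (𝓝 w)) (hw0 : w 0 = 0) :
    ∃ Δ, IsGammaPlusFace c Δ ∧ ∃ (a : Fin n → ℂ) (r : ℝ), (∀ i, a i ≠ 0) ∧ ∀ p ∈ c.support,
      {p | suppPt p ∈ Δ}.indicator (fun p => monomial p a) p = r * w p := by
  obtain ⟨v, D, a, r, ha, h⟩ := exists_weight_of_tendsto_relMonomial hz hw
  have hD : 0 < D := by
    simpa only [suppPt_zero, zero_dotProduct] using (h 0 (zero_mem_gammaExps c)).2 hw0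
  have hsum : ∑ p ∈ gammaExps c, ‖w p‖ = 1 :=
    tendsto_nhds_unique (tendsto_finsetSum _ fun p _ => (tendsto_pi_nhds.1 hw p).norm)
      (by simp only [sum_norm_relMonomial, tendsto_const_nhds])
  obtain ⟨q, hq, hwq⟩ : ∃ q ∈ gammaExps c, ‖w q‖ ≠ 0 :=
    exists_ne_zero_of_sum_ne_zero (hsum.trans_ne one_ne_zero)
  rw [norm_ne_zero_iff] at hwq
  have hqc : q ∈ c.support := (mem_insert.1 hq).resolve_left fun hq0 => hwq (hq0 ▸ hw0)
  refine ⟨{x ∈ Gamma0 c | x ⬝ᵥ v = D}, isGammaPlusFace_of_le hD (fun p hp => ?_)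
    ⟨q, hqc, ((h q hq).1 hwq).1⟩, a, r, ha, fun p hp => ?_⟩
  · by_cases hwp : w p = 0
    · exact ((h p (mem_gammaExps_of_mem_support hp)).2 hwp).le
    · exact ((h p (mem_gammaExps_of_mem_support hp)).1 hwp).1.le
  · by_cases hwp : w p = 0
    · rw [hwp, mul_zero, Set.indicator_of_notMem]
      exact fun hmem => ((h p (mem_gammaExps_of_mem_support hp)).2 hwp).ne hmem.2
    · obtain ⟨hpD, hpa⟩ := (h p (mem_gammaExps_of_mem_support hp)).1 hwp
      rw [Set.indicator_of_mem, hpa]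
      exact ⟨suppPt_mem_Gamma0 hp, hpD⟩

lemma logForm_ne_zero_of_tendsto_relMonomial (hnd : NewtonStronglyNonDeg c) {F : Ultrafilter α}
    (hz : ∀ k i, z k i ≠ 0) (hw : Tendsto (fun k => relMonomial c (z k)) F (𝓝 w)) (hw0 : w 0 = 0)
    {m : ℂ} (hm : ‖m‖ = 1) : logForm c m w ≠ 0 := by
  intro hzero
  obtain ⟨Δ, hΔ, a, r, ha, haw⟩ := exists_face_of_tendsto_relMonomial hz hw hw0
  refine hnd Δ hΔ a ha (mem_Sing_iff.2 ⟨m, hm, funext fun i => ?_⟩)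
  have hi : conj (a i) * realGrad (trunc c Δ) m a i = 0 := by
    rw [← logForm_monomial, logForm_trunc, logForm_congr haw, logForm_ofReal_mul, hzero,
      Pi.zero_apply, mul_zero]
  exact (mul_eq_zero.1 hi).resolve_left ((map_ne_zero _).2 (ha i))

end Limits

end ToricDegeneration

section LojasiewiczInequality

/-- The Łojasiewicz-type inequality at infinity: where the monomials of `f` are large, each real
component `Re (conj m · f)` has logarithmic gradient at least `ε` times the size of the
monomials. -/
def LogGradientBound (c : MixedCoeff n) (C ε : ℝ) : Prop :=
  ∀ (m : ℂ) (z : Fin n → ℂ), ‖m‖ = 1 → C < size c z → ε ≤ ‖logForm c m (relMonomial c z)‖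

lemma exists_le_norm_logForm_of_ne_zero {c : MixedCoeff n} (hnd : NewtonStronglyNonDeg c) :
    ∃ C : ℝ, ∃ ε > 0, ∀ (m : ℂ) (z : Fin n → ℂ), ‖m‖ = 1 → (∀ i, z i ≠ 0) → C < size c z →
      ε ≤ ‖logForm c m (relMonomial c z)‖ := by
  by_contra! hcon
  choose m z hm hz hsize hsmall using fun k : ℕ => hcon k (1 / (k + 1)) Nat.one_div_pos_of_nat
  obtain ⟨m₀, hm₀, hmlim⟩ := exists_tendsto_ultrafilter_of_isCompact (isCompact_sphere (0 : ℂ) 1)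
    (hyperfilter ℕ) fun k => mem_sphere_zero_iff_norm.2 (hm k)
  obtain ⟨w, hw⟩ := exists_tendsto_relMonomial c (hyperfilter ℕ) z
  have hF : (hyperfilter ℕ : Filter ℕ) ≤ atTop := Nat.hyperfilter_le_atTop
  have hsizelim : Tendsto (fun k => size c (z k)) (hyperfilter ℕ) atTop :=
    tendsto_atTop_mono (fun k => (hsize k).le) (tendsto_natCast_atTop_atTop.mono_left hF)
  have hw0 : w 0 = 0 :=
    tendsto_nhds_unique (tendsto_pi_nhds.1 hw 0) (tendsto_relMonomial_zero hsizelim)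
  have hlog0 : logForm c m₀ w = 0 :=
    tendsto_nhds_unique (tendsto_logForm c hmlim hw) <|
      (squeeze_zero_norm (fun k => (hsmall k).le)
        tendsto_one_div_add_atTop_nhds_zero_nat).mono_left hF
  exact logForm_ne_zero_of_tendsto_relMonomial hnd hz hw hw0 (mem_sphere_zero_iff_norm.1 hm₀) hlog0

lemma exists_logGradientBound {c : MixedCoeff n} (hnd : NewtonStronglyNonDeg c) :
    ∃ C : ℝ, ∃ ε > 0, LogGradientBound c C ε := by
  obtain ⟨C, ε, hε, h⟩ := exists_le_norm_logForm_of_ne_zero hnd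
  refine ⟨C, ε, hε, fun m z hm hz => ?_⟩
  have hclosed : IsClosed {z | size c z ≤ C ∨ ε ≤ ‖logForm c m (relMonomial c z)‖} :=
    (isClosed_le (continuous_size c) continuous_const).union <| isClosed_le continuous_const
      ((continuous_logForm c).comp (continuous_const.prodMk (continuous_relMonomial c))).norm
  have htorus : {z : Fin n → ℂ | ∀ i, z i ≠ 0} ⊆
      {z | size c z ≤ C ∨ ε ≤ ‖logForm c m (relMonomial c z)‖} :=
    fun z hz => or_iff_not_imp_left.2 fun hC => h m z hm hz (not_le.1 hC)
  exact (closure_minimal htorus hclosed (dense_forall_ne_zero z)).resolve_left hz.not_ge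

lemma norm_eval_le_of_mem_Sing {c : MixedCoeff n} {C ε : ℝ} (hε : 0 < ε)
    (hC : LogGradientBound c C ε) {z : Fin n → ℂ} (hz : z ∈ Sing c) :
    ‖eval c z‖ ≤ (∑ p ∈ c.support, ‖c p‖) * C := by
  obtain ⟨m, hm, hgrad⟩ := mem_Sing_iff.1 hz
  have hlog : logForm c m (relMonomial c z) = 0 := by
    ext i
    rw [logForm_relMonomial, hgrad, Pi.zero_apply, mul_zero, zero_div]
  have hsize : size c z ≤ C := by
    by_contra! hlt
    exact hε.not_ge ((hC m z hm hlt).trans_eq (hlog ▸ norm_zero))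
  exact (norm_eval_le c z).trans
    (mul_le_mul_of_nonneg_left hsize (sum_nonneg fun p _ => norm_nonneg (c p)))

end LojasiewiczInequality

section Milnor

lemma exists_weight_of_tendsto_mul_norm_sq {α : Type*} {c : MixedCoeff n} {F : Filter α} [NeBot F]
    {z : α → Fin n → ℂ} {w : Exponent n → ℂ} {l : α → ℝ} {γ : Fin n → ℝ}
    (hw : Tendsto (fun k => relMonomial c (z k)) F (𝓝 w)) (hl : Tendsto l F (𝓝 0))
    (hγ : ∀ i, Tendsto (fun k => l k * ‖z k i‖ ^ 2) F (𝓝 (γ i))) (hγ0 : ∃ i, γ i ≠ 0) :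
    ∃ (v : Fin n → ℝ) (D s : ℝ), s ≠ 0 ∧ (∀ p, w p ≠ 0 → suppPt p ⬝ᵥ v = D) ∧
      ∀ i, γ i ≠ 0 → v i = s := by
  have hlne : ∀ᶠ k in F, l k ≠ 0 := by
    obtain ⟨i, hi⟩ := hγ0
    filter_upwards [(hγ i).eventually_ne hi] with k hk using left_ne_zero_of_mul hk
  -- `Real.log (l k)` means `log |l k|`, so the sign of `l k` does not matter.
  have hlog : Tendsto (fun k => Real.log (l k)) F atBot :=
    Real.tendsto_log_nhdsNE_zero.comp (tendsto_nhdsWithin_iff.2 ⟨hl, hlne⟩)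
  have hbalance (i : {i // γ i ≠ 0}) :
      Tendsto (fun k => Real.log (l k) + 2 * Real.log ‖z k i‖) F (𝓝 (Real.log (γ i))) := by
    refine ((hγ i).log i.2).congr' ?_
    filter_upwards [(hγ i).eventually_ne i.2] with k hk
    rw [Real.log_mul (left_ne_zero_of_mul hk) (right_ne_zero_of_mul hk), Real.log_pow, Nat.cast_two]
  let balance (i : Fin n) : ((Fin n → ℝ) × ℝ) × ℝ →ₗ[ℝ] ℝ :=
    LinearMap.snd ℝ _ ℝ + (2 : ℝ) •
      (LinearMap.proj i ∘ₗ LinearMap.fst ℝ (Fin n → ℝ) ℝ ∘ₗ LinearMap.fst ℝ _ ℝ)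
  obtain ⟨-, ⟨⟨v, D⟩, s⟩, -, hv, hneg⟩ := exists_mem_fiber_and_recession
    (X := fun k => (logCoord c (z k), Real.log (l k)))
    ((LinearMap.pi fun p : {p // w p ≠ 0} => excess p.1 ∘ₗ LinearMap.fst ℝ _ ℝ).prod
      (LinearMap.pi fun i : {i // γ i ≠ 0} => balance i))
    ((tendsto_pi_nhds.2 fun p => tendsto_excess_logCoord hw p.2).prodMk_nhds
      (tendsto_pi_nhds.2 hbalance))
    (fun _ : Unit => LinearMap.snd ℝ _ ℝ) fun _ => hlog
  have hs : s < 0 := hneg ()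
  refine ⟨v, D, -s / 2, by linarith, fun p hp => ?_, fun i hi => ?_⟩
  · exact sub_eq_zero.1 ((excess_apply p _).symm.trans (congrFun (congrArg Prod.fst hv) ⟨p, hp⟩))
  · have : s + 2 * v i = 0 := congrFun (congrArg Prod.snd hv) ⟨i, hi⟩
    linarith

lemma sum_re_logForm_eq_zero {α : Type*} {c : MixedCoeff n} {F : Filter α} [NeBot F]
    {z : α → Fin n → ℂ} {m : α → ℂ} {l : α → ℝ} {w : Exponent n → ℂ} {m₀ b : ℂ}
    (hm : Tendsto m F (𝓝 m₀)) (hw : Tendsto (fun k => relMonomial c (z k)) F (𝓝 w))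
    (hl : ∀ k i, logForm c (m k) (relMonomial c (z k)) i = (l k * ‖z k i‖ ^ 2 : ℝ))
    (hz : Tendsto (fun k => ‖z k‖) F atTop) (hb : Tendsto (fun k => eval c (z k)) F (𝓝 b)) :
    ∑ i, (logForm c m₀ w i).re = 0 := by
  by_contra hsum
  have hγ (i : Fin n) : Tendsto (fun k => l k * ‖z k i‖ ^ 2) F (𝓝 (logForm c m₀ w i).re) := by
    simpa only [Function.comp_def, hl, ofReal_re] using
      (continuous_re.tendsto _).comp (tendsto_pi_nhds.1 (tendsto_logForm c hm hw) i)
  have hl0 : Tendsto l F (𝓝 0) := by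
    have hQ : Tendsto (fun k => ∑ i, ‖z k i‖ ^ 2) F atTop :=
      tendsto_atTop_mono (fun k => norm_sq_le_sum_norm_sq (z k))
        ((tendsto_pow_atTop two_ne_zero).comp hz)
    refine ((tendsto_finsetSum univ fun i _ => hγ i).div_atTop hQ).congr' ?_
    filter_upwards [hQ.eventually_gt_atTop 0] with k hk
    rw [← mul_sum, mul_div_cancel_right₀ _ hk.ne']
  obtain ⟨i, -, hi⟩ := exists_ne_zero_of_sum_ne_zero hsum
  obtain ⟨v, D, s, hs, hD, hv⟩ := exists_weight_of_tendsto_mul_norm_sq hw hl0 hγ ⟨i, hi⟩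
  have hbw : ∑ p ∈ c.support, c p * w p = b * w 0 := by
    have hw' := tendsto_pi_nhds.1 hw
    refine tendsto_nhds_unique (tendsto_finsetSum _ fun p _ => (hw' p).const_mul (c p)) ?_
    simpa only [sum_mul_relMonomial] using hb.mul (hw' 0)
  have hD0 : D * (conj m₀ * (b * w 0)).re = 0 := by
    rcases eq_or_ne (w 0) 0 with hw0 | hw0
    · rw [hw0, mul_zero, mul_zero, zero_re, mul_zero]
    · rw [← hD 0 hw0, suppPt_zero, zero_dotProduct, zero_mul]
  have hvs : ∑ i, v i * (logForm c m₀ w i).re = s * ∑ i, (logForm c m₀ w i).re := by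
    rw [mul_sum]
    refine sum_congr rfl fun i _ => ?_
    by_cases hi : (logForm c m₀ w i).re = 0
    · rw [hi, mul_zero, mul_zero]
    · rw [hv i hi]
  have heuler := sum_mul_re_logForm (fun p _ => hD p) m₀ (c := c)
  rw [hvs, hbw, hD0] at heuler
  exact (mul_ne_zero hs hsum) heuler

lemma norm_le_abs_sum_re {ι E : Type*} [Fintype ι] [SeminormedAddCommGroup E] {W : ι → ℂ}
    {z : ι → E} {l : ℝ} (hW : ∀ i, W i = (l * ‖z i‖ ^ 2 : ℝ)) : ‖W‖ ≤ |∑ i, (W i).re| := by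
  simp only [hW, ofReal_re, ← mul_sum]
  refine (pi_norm_le_iff_of_nonneg (abs_nonneg _)).2 fun i => ?_
  rw [hW, norm_real, Real.norm_eq_abs, abs_mul, abs_mul]
  gcongr
  exact single_le_sum (f := fun i => ‖z i‖ ^ 2) (fun _ _ => sq_nonneg _) (mem_univ i)

lemma norm_le_of_mem_Sset {c : MixedCoeff n} {C ε : ℝ} (hε : 0 < ε)
    (hC : LogGradientBound c C ε) {b : ℂ} (hb : b ∈ Sset c) :
    ‖b‖ ≤ (∑ p ∈ c.support, ‖c p‖) * C := by
  obtain ⟨z, hM, hz, hlim⟩ := hb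
  choose m l hm hl using fun k => exists_unit_realGrad_eq_of_mem_Milnor (hM k)
  have hF : (hyperfilter ℕ : Filter ℕ) ≤ atTop := Nat.hyperfilter_le_atTop
  obtain ⟨m₀, -, hmlim⟩ := exists_tendsto_ultrafilter_of_isCompact (isCompact_sphere (0 : ℂ) 1)
    (hyperfilter ℕ) fun k => mem_sphere_zero_iff_norm.2 (hm k)
  obtain ⟨w, hw⟩ := exists_tendsto_relMonomial c (hyperfilter ℕ) z
  have hlog (k : ℕ) (i : Fin n) : logForm c (m k) (relMonomial c (z k)) i =
      (l k / size c (z k) * ‖z k i‖ ^ 2 : ℝ) := by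
    rw [logForm_relMonomial, hl, mul_left_comm, conj_mul']
    push_cast
    ring
  have hsum : Tendsto (fun k => |∑ i, (logForm c (m k) (relMonomial c (z k)) i).re|)
      (hyperfilter ℕ) (𝓝 0) := by
    rw [← abs_zero,
      ← sum_re_logForm_eq_zero hmlim hw hlog (hz.mono_left hF) (hlim.mono_left hF)]
    exact (tendsto_finsetSum _ fun i _ =>
      (continuous_re.tendsto _).comp (tendsto_pi_nhds.1 (tendsto_logForm c hmlim hw) i)).abs
  by_contra! hbC
  have hbig : ∀ᶠ k in hyperfilter ℕ, ε ≤ |∑ i, (logForm c (m k) (relMonomial c (z k)) i).re| := by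
    filter_upwards [(hlim.norm.mono_left hF).eventually_const_lt hbC] with k hk
    have hsize : C < size c (z k) := lt_of_mul_lt_mul_left (hk.trans_le (norm_eval_le c (z k)))
      (sum_nonneg fun p _ => norm_nonneg (c p))
    exact (hC (m k) (z k) (hm k) hsize).trans (norm_le_abs_sum_re (hlog k))
  exact hε.not_ge (ge_of_tendsto hsum hbig)

end Milnor

end Mixed

theorem bounded_of_strongly_nondeg_general {n : ℕ} (c : MixedCoeff n)
    (hnd : Mixed.NewtonStronglyNonDeg c) :
    Bornology.IsBounded (Mixed.eval c '' Mixed.Sing c) ∧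
    Bornology.IsBounded (Mixed.Sset c) := by
  obtain ⟨C, ε, hε, hC⟩ := Mixed.exists_logGradientBound hnd
  refine ⟨isBounded_iff_forall_norm_le.2 ⟨(∑ p ∈ c.support, ‖c p‖) * C, ?_⟩,
    isBounded_iff_forall_norm_le.2 ⟨(∑ p ∈ c.support, ‖c p‖) * C, fun v hv => ?_⟩⟩
  · rintro _ ⟨z, hz, rfl⟩
    exact Mixed.norm_eval_le_of_mem_Sing hε hC hz
  · exact Mixed.norm_le_of_mem_Sset hε hC hv

/-- Theorem 3.6(2): if `f` depends effectively on all variables, `f(0) = 0`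
and `f` is Newton strongly non-degenerate, then `f(Sing f)` and `S(f)` are bounded. -/
theorem bounded_of_strongly_nondeg {n : ℕ} (c : MixedCoeff n)
    (heff : Mixed.EffectiveAll c) (h0 : Mixed.eval c 0 = 0)
    (hnd : Mixed.NewtonStronglyNonDeg c) :
    Bornology.IsBounded (Mixed.eval c '' Mixed.Sing c) ∧
    Bornology.IsBounded (Mixed.Sset c) :=
  bounded_of_strongly_nondeg_general c hnd
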